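/- arXiv:2203.05312 — 5 statements merged into one kernel-verified Lean document; each statement's English description precedes it below -/
import Mathlib

section
/- The Lizorkin space is not topologically complemented in the Schwartz space: for every dimension d ≥ 1 there is no continuous linear map P : S(ℝ^d) → S(ℝ^d) (with respect to the Fréchet topology of the Schwartz space) satisfying P ∘ P = P whose range is exactly the Lizorkin space S_Liz(ℝ^d). -/
/-!
The quotient of the Schwartz space by the Lizorkin space is a space of moment sequences, on which
no continuous norm exists, whereas the Schwartz space carries the continuous norm `sup |φ|`.
A complement of the Lizorkin space would be a copy of that quotient inside the Schwartz space.

Concretely, let `P` be a projection and `Q = 1 - P`, so that `Q` vanishes precisely on the Lizorkin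
space. By continuity, `sup |Q 𝓕⁻ g| ≤ C p(g)` where `p` is a finite supremum of Schwartz seminorms,
involving derivatives of order at most `N`. Put `m = N + 1` and `g(ξ) = ξ₀ ^ m χ(ξ)` with `χ` a bump
function equal to `1` near the origin. For `R ≥ 1` the function
`g_R(ξ) = R ^ (-m) g(R ξ) = ξ₀ ^ m χ(R ξ)` coincides with `g` near the origin, hence `𝓕⁻ (g - g_R)`
is Lizorkin (`isLizorkin_of_fourier_eventually_zero`) and `Q 𝓕⁻ g = Q 𝓕⁻ g_R`. Since
`p(g_R) ≤ R⁻¹ p(g)` (`seminorm_rescale_le`), letting `R → ∞` gives `Q 𝓕⁻ g = 0`, so `𝓕⁻ g` is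
Lizorkin. This is absurd, because the `m`-th derivative of `g` at the origin in the direction `ξ₀`
is `m!`, and it is a nonzero multiple of a moment of `𝓕⁻ g`
(`not_isLizorkin_of_fourier_eq_mulX_iterate`).
-/

open MeasureTheory

/-- A Schwartz function belongs to the Lizorkin space if all its moments vanish. -/
def IsLizorkin (d : ℕ) (φ : SchwartzMap (EuclideanSpace ℝ (Fin d)) ℂ) : Prop :=
  ∀ k : Fin d → ℕ,
    ∫ x : EuclideanSpace ℝ (Fin d), (∏ i, ((x i : ℝ) : ℂ) ^ k i) * φ x = 0

open scoped SchwartzMap FourierTransform LineDeriv Topology NNReal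

/-- Multiplication of Schwartz functions by the `i`-th coordinate function. -/
noncomputable def mulX {d : ℕ} (i : Fin d) :
    𝓢(EuclideanSpace ℝ (Fin d), ℂ) →L[ℂ] 𝓢(EuclideanSpace ℝ (Fin d), ℂ) :=
  SchwartzMap.smulLeftCLM ℂ (fun x : EuclideanSpace ℝ (Fin d) ↦ ((x i : ℝ) : ℂ))

lemma hasTemperateGrowth_coord {d : ℕ} (i : Fin d) :
    (fun x : EuclideanSpace ℝ (Fin d) ↦ ((x i : ℝ) : ℂ)).HasTemperateGrowth :=
  (Complex.ofRealCLM ∘L (EuclideanSpace.proj (𝕜 := ℝ) i :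
    EuclideanSpace ℝ (Fin d) →L[ℝ] ℝ)).hasTemperateGrowth

lemma hasTemperateGrowth_monomial {d : ℕ} (k : Fin d → ℕ) (s : Finset (Fin d)) :
    (fun x : EuclideanSpace ℝ (Fin d) ↦ ∏ i ∈ s, ((x i : ℝ) : ℂ) ^ k i).HasTemperateGrowth := by
  induction s using Finset.induction_on with
  | empty => simp
  | insert a s ha ih =>
    simp only [Finset.prod_insert ha]
    exact ((hasTemperateGrowth_coord a).pow (k a)).mul ih

@[simp]
lemma mulX_apply {d : ℕ} (i : Fin d) (f : 𝓢(EuclideanSpace ℝ (Fin d), ℂ))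
    (x : EuclideanSpace ℝ (Fin d)) : mulX i f x = ((x i : ℝ) : ℂ) * f x := by
  simp [mulX, SchwartzMap.smulLeftCLM_apply_apply (hasTemperateGrowth_coord i)]

lemma mulX_iterate_apply {d : ℕ} (i : Fin d) (n : ℕ) (f : 𝓢(EuclideanSpace ℝ (Fin d), ℂ))
    (x : EuclideanSpace ℝ (Fin d)) : ((mulX i)^[n] f) x = ((x i : ℝ) : ℂ) ^ n * f x := by
  induction n with
  | zero => simp
  | succ n ih => rw [Function.iterate_succ_apply', mulX_apply, ih, pow_succ']; ring

lemma lineDeriv_fourier {d : ℕ} (i : Fin d) (f : 𝓢(EuclideanSpace ℝ (Fin d), ℂ)) :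
    ∂_{EuclideanSpace.single i (1 : ℝ)} (𝓕 f) =
      (-(2 * Real.pi * Complex.I)) • 𝓕 (mulX i f) := by
  rw [SchwartzMap.lineDerivOp_fourier_eq, FourierTransform.fourier_smul]
  congr 2
  ext x
  have h : (inner ℝ · (EuclideanSpace.single i (1 : ℝ)) :
      EuclideanSpace ℝ (Fin d) → ℝ).HasTemperateGrowth := by fun_prop
  rw [SchwartzMap.smulLeftCLM_apply_apply h]
  simp [EuclideanSpace.inner_single_right]

lemma fourier_mulX {d : ℕ} (i : Fin d) (f : 𝓢(EuclideanSpace ℝ (Fin d), ℂ)) :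
    𝓕 (mulX i f) =
      (-(2 * Real.pi * Complex.I))⁻¹ • ∂_{EuclideanSpace.single i (1 : ℝ)} (𝓕 f) := by
  rw [lineDeriv_fourier, inv_smul_smul₀]
  simp [Real.pi_ne_zero]

lemma fourier_mulX_iterate {d : ℕ} (i : Fin d) (n : ℕ) (f : 𝓢(EuclideanSpace ℝ (Fin d), ℂ)) :
    𝓕 ((mulX i)^[n] f) = ((-(2 * Real.pi * Complex.I))⁻¹) ^ n •
      (fun g : 𝓢(EuclideanSpace ℝ (Fin d), ℂ) ↦
        ∂_{EuclideanSpace.single i (1 : ℝ)} g)^[n] (𝓕 f) := by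
  induction n with
  | zero => simp
  | succ n ih =>
    rw [Function.iterate_succ_apply', fourier_mulX, ih, LineDeriv.lineDerivOp_smul, smul_smul,
      Function.iterate_succ_apply', pow_succ']

lemma integral_eq_fourier_zero {d : ℕ} (f : 𝓢(EuclideanSpace ℝ (Fin d), ℂ)) :
    ∫ x, f x = 𝓕 f 0 := by
  rw [SchwartzMap.fourier_coe, Real.fourier_eq]
  simp

/-- The class of functions whose Fourier transform vanishes near `0` is stable under
multiplication by coordinates, which acts as differentiation on the Fourier side. -/
lemma fourier_mulX_eventually_zero {d : ℕ} (i : Fin d) {f : 𝓢(EuclideanSpace ℝ (Fin d), ℂ)}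
    (hf : ∀ᶠ x in 𝓝 0, 𝓕 f x = 0) : ∀ᶠ x in 𝓝 0, 𝓕 (mulX i f) x = 0 := by
  filter_upwards [hf.eventually_nhds] with x hx
  have h : (𝓕 f : 𝓢(EuclideanSpace ℝ (Fin d), ℂ)) =ᶠ[𝓝 x] (fun _ ↦ (0 : ℂ)) := hx
  rw [fourier_mulX, smul_apply, SchwartzMap.lineDerivOp_apply_eq_fderiv, h.fderiv_eq]
  simp

lemma isLizorkin_of_fourier_eventually_zero {d : ℕ} {f : 𝓢(EuclideanSpace ℝ (Fin d), ℂ)}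
    (hf : ∀ᶠ x in 𝓝 0, 𝓕 f x = 0) : IsLizorkin d f := by
  intro k
  have key : ∀ s : Finset (Fin d), ∃ g : 𝓢(EuclideanSpace ℝ (Fin d), ℂ),
      (∀ x, g x = (∏ i ∈ s, ((x i : ℝ) : ℂ) ^ k i) * f x) ∧ ∀ᶠ x in 𝓝 0, 𝓕 g x = 0 := by
    intro s
    induction s using Finset.induction_on with
    | empty => exact ⟨f, by simp, hf⟩
    | insert a s ha ih =>
      obtain ⟨g, hg, hg0⟩ := ih
      refine ⟨(mulX a)^[k a] g, fun x ↦ ?_, ?_⟩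
      · rw [mulX_iterate_apply, hg, Finset.prod_insert ha, mul_assoc]
      · generalize k a = n
        induction n with
        | zero => exact hg0
        | succ n ih =>
          rw [Function.iterate_succ_apply']
          exact fourier_mulX_eventually_zero a ih
  obtain ⟨g, hg, hg0⟩ := key Finset.univ
  simp only [← hg]
  rw [integral_eq_fourier_zero]
  exact hg0.self_of_nhds

/-- The commutation relation between differentiation and multiplication by the coordinate. -/
lemma lineDeriv_mulX {d : ℕ} (i : Fin d) (f : 𝓢(EuclideanSpace ℝ (Fin d), ℂ)) :
    ∂_{EuclideanSpace.single i (1 : ℝ)} (mulX i f) =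
      f + mulX i (∂_{EuclideanSpace.single i (1 : ℝ)} f) := by
  ext x
  have h1 : HasFDerivAt (fun x : EuclideanSpace ℝ (Fin d) ↦ ((x i : ℝ) : ℂ))
      (Complex.ofRealCLM ∘L (EuclideanSpace.proj (𝕜 := ℝ) i :
        EuclideanSpace ℝ (Fin d) →L[ℝ] ℝ)) x :=
    (Complex.ofRealCLM ∘L (EuclideanSpace.proj (𝕜 := ℝ) i :
        EuclideanSpace ℝ (Fin d) →L[ℝ] ℝ)).hasFDerivAt
  have h2 := h1.mul (f.hasFDerivAt x)
  have h3 : (mulX i f : EuclideanSpace ℝ (Fin d) → ℂ) =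
      (fun x : EuclideanSpace ℝ (Fin d) ↦ ((x i : ℝ) : ℂ)) * ⇑f := by
    ext y; simp
  have h4 (a b : 𝓢(EuclideanSpace ℝ (Fin d), ℂ)) : (a + b) x = a x + b x := rfl
  rw [SchwartzMap.lineDerivOp_apply_eq_fderiv, h3, h2.fderiv, h4, mulX_apply,
    SchwartzMap.lineDerivOp_apply_eq_fderiv]
  simp [add_comm]

lemma lineDeriv_mulX_iterate {d : ℕ} (i : Fin d) (n : ℕ)
    (f : 𝓢(EuclideanSpace ℝ (Fin d), ℂ)) :
    ∂_{EuclideanSpace.single i (1 : ℝ)} ((mulX i)^[n + 1] f) =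
      (mulX i)^[n] (((n : ℂ) + 1) • f + mulX i (∂_{EuclideanSpace.single i (1 : ℝ)} f)) := by
  induction n generalizing f with
  | zero => simp [lineDeriv_mulX]
  | succ n ih =>
    rw [Function.iterate_succ_apply, ih, lineDeriv_mulX, Function.iterate_succ_apply]
    congr 1
    simp only [map_add, map_smul, Nat.cast_add, Nat.cast_one, add_smul, one_smul]
    abel

/-- The derivative `∂ᵢⁿ (xᵢⁿ f)` takes the value `n! f(0)` at the origin. -/
lemma lineDeriv_iterate_mulX_iterate {d : ℕ} (i : Fin d) (n : ℕ)
    (f : 𝓢(EuclideanSpace ℝ (Fin d), ℂ)) :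
    ((fun g : 𝓢(EuclideanSpace ℝ (Fin d), ℂ) ↦
      ∂_{EuclideanSpace.single i (1 : ℝ)} g)^[n] ((mulX i)^[n] f)) 0 = n.factorial * f 0 := by
  induction n generalizing f with
  | zero => simp
  | succ n ih =>
    rw [Function.iterate_succ_apply, lineDeriv_mulX_iterate, ih]
    simp [Nat.factorial_succ]
    ring

lemma not_isLizorkin_of_fourier_eq_mulX_iterate {d : ℕ} (i : Fin d) (n : ℕ)
    {f χ : 𝓢(EuclideanSpace ℝ (Fin d), ℂ)} (hf : 𝓕 f = (mulX i)^[n] χ) (hχ : χ 0 ≠ 0) :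
    ¬ IsLizorkin d f := by
  intro h
  have h1 := h (Pi.single i n)
  have h2 : ∀ x : EuclideanSpace ℝ (Fin d),
      (∏ j, ((x j : ℝ) : ℂ) ^ (Pi.single i n : Fin d → ℕ) j) * f x = ((mulX i)^[n] f) x := by
    intro x
    rw [mulX_iterate_apply, Finset.prod_eq_single i]
    · simp
    · intro j _ hj
      simp [hj]
    · simp
  simp only [h2] at h1
  rw [integral_eq_fourier_zero, fourier_mulX_iterate, hf, smul_apply,
    lineDeriv_iterate_mulX_iterate] at h1
  simp [Real.pi_ne_zero, hχ, Nat.factorial_ne_zero] at h1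

/-- The rescaling `g ↦ R ^ (-m) g(R ·)`, which fixes functions homogeneous of degree `m`. -/
noncomputable def rescale {d : ℕ} (m : ℕ) (R : ℝ) (hR : R ≠ 0)
    (g : 𝓢(EuclideanSpace ℝ (Fin d), ℂ)) : 𝓢(EuclideanSpace ℝ (Fin d), ℂ) :=
  ((R : ℂ) ^ m)⁻¹ • SchwartzMap.compCLMOfContinuousLinearEquiv ℂ
    (ContinuousLinearEquiv.smulLeft (Units.mk0 R hR)) g

lemma rescale_apply {d : ℕ} (m : ℕ) (R : ℝ) (hR : R ≠ 0)
    (g : 𝓢(EuclideanSpace ℝ (Fin d), ℂ)) (x : EuclideanSpace ℝ (Fin d)) :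
    rescale m R hR g x = ((R : ℂ) ^ m)⁻¹ * g (R • x) := rfl

/-- Each derivative costs a factor `R`, so rescaling in degree `m` is contracting for seminorms
involving fewer than `m` derivatives. -/
lemma seminorm_rescale_le {d : ℕ} {m k n : ℕ} (hn : n < m) {R : ℝ} (hR : 1 ≤ R)
    (g : 𝓢(EuclideanSpace ℝ (Fin d), ℂ)) :
    SchwartzMap.seminorm ℂ k n (rescale m R (by positivity) g) ≤
      R⁻¹ * SchwartzMap.seminorm ℂ k n g := by
  have hR0 : 0 < R := by positivity
  refine SchwartzMap.seminorm_le_bound ℂ k n _ (by positivity) fun x ↦ ?_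
  have h1 : (rescale m R hR0.ne' g : EuclideanSpace ℝ (Fin d) → ℂ) =
      ((R : ℂ) ^ m)⁻¹ • (fun y ↦ g (R • y)) := rfl
  have hc : ContDiff ℝ n (fun y ↦ g (R • y)) := (g.smooth n).comp (contDiff_const_smul R)
  rw [h1, iteratedFDeriv_const_smul_apply hc.contDiffAt,
    iteratedFDeriv_comp_const_smul R (g.smooth n), norm_smul, norm_smul]
  have h2 := SchwartzMap.le_seminorm ℂ k n g (R • x)
  have h3 : ‖x‖ ^ k ≤ ‖R • x‖ ^ k := by
    rw [norm_smul, Real.norm_of_nonneg hR0.le]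
    gcongr
    exact le_mul_of_one_le_left (norm_nonneg x) hR
  have h4 : ‖((R : ℂ) ^ m)⁻¹‖ * ‖R ^ n‖ ≤ R⁻¹ := by
    rw [norm_inv, norm_pow, norm_pow, Complex.norm_real, Real.norm_of_nonneg hR0.le,
      inv_mul_le_iff₀ (by positivity), ← div_eq_mul_inv, le_div_iff₀ hR0, ← pow_succ]
    exact pow_le_pow_right₀ hR hn
  calc ‖x‖ ^ k * (‖((R : ℂ) ^ m)⁻¹‖ * (‖R ^ n‖ * ‖iteratedFDeriv ℝ n g (R • x)‖))
      = (‖((R : ℂ) ^ m)⁻¹‖ * ‖R ^ n‖) * (‖x‖ ^ k * ‖iteratedFDeriv ℝ n g (R • x)‖) := by ring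
    _ ≤ R⁻¹ * (‖R • x‖ ^ k * ‖iteratedFDeriv ℝ n g (R • x)‖) := by gcongr
    _ ≤ R⁻¹ * SchwartzMap.seminorm ℂ k n g := by gcongr

lemma exists_schwartz_eventually_one (d : ℕ) :
    ∃ χ : 𝓢(EuclideanSpace ℝ (Fin d), ℂ), ∀ᶠ x in 𝓝 0, χ x = 1 := by
  let b : ContDiffBump (0 : EuclideanSpace ℝ (Fin d)) := default
  have h1 : HasCompactSupport (fun x ↦ ((b x : ℝ) : ℂ)) :=
    b.hasCompactSupport.comp_left (g := Complex.ofReal) Complex.ofReal_zero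
  have h2 : ContDiff ℝ (⊤ : ℕ∞) (fun x ↦ ((b x : ℝ) : ℂ)) :=
    Complex.ofRealCLM.contDiff.comp b.contDiff
  refine ⟨h1.toSchwartzMap h2, ?_⟩
  filter_upwards [b.eventuallyEq_one] with x hx
  simp [hx]

/-- The Lizorkin space is not topologically complemented in the Schwartz space: there is no
continuous linear projection of the Schwartz space onto the Lizorkin space. -/
theorem no_projection_onto_Lizorkin (d : ℕ) (hd : 1 ≤ d) :
    ¬ ∃ P : SchwartzMap (EuclideanSpace ℝ (Fin d)) ℂ →L[ℂ]
            SchwartzMap (EuclideanSpace ℝ (Fin d)) ℂ,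
      (∀ φ, P (P φ) = P φ) ∧
      (∀ φ, (∃ ψ, P ψ = φ) ↔ IsLizorkin d φ) := by
  rintro ⟨P, hPP, hP⟩
  let i : Fin d := ⟨0, hd⟩
  obtain ⟨χ, hχ⟩ := exists_schwartz_eventually_one d
  -- `T` is `Q ∘ 𝓕⁻` with `Q = 1 - P`
  let T : 𝓢(EuclideanSpace ℝ (Fin d), ℂ) →L[ℂ] 𝓢(EuclideanSpace ℝ (Fin d), ℂ) :=
    (ContinuousLinearMap.id ℂ _ - P) ∘L
      FourierTransform.fourierInvCLM ℂ 𝓢(EuclideanSpace ℝ (Fin d), ℂ)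
  have hT : ∀ g, T g = 𝓕⁻ g - P (𝓕⁻ g) := fun g ↦ rfl
  have hT0 : ∀ g : 𝓢(EuclideanSpace ℝ (Fin d), ℂ), (∀ᶠ x in 𝓝 0, g x = 0) → T g = 0 := by
    intro g hg
    have hL : IsLizorkin d (𝓕⁻ g) :=
      isLizorkin_of_fourier_eventually_zero (by simpa using hg)
    obtain ⟨ψ, hψ⟩ := (hP _).2 hL
    rw [hT, ← hψ, hPP, sub_self]
  let q : Seminorm ℂ 𝓢(EuclideanSpace ℝ (Fin d), ℂ) :=
    (SchwartzMap.seminorm ℂ 0 0).comp T.toLinearMap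
  have hq : Continuous q :=
    ((schwartz_withSeminorms ℂ (EuclideanSpace ℝ (Fin d)) ℂ).continuous_seminorm (0, 0)).comp
      T.continuous
  obtain ⟨s, C, -, hC⟩ := Seminorm.bound_of_continuous
    (schwartz_withSeminorms ℂ (EuclideanSpace ℝ (Fin d)) ℂ) q hq
  let p := s.sup (schwartzSeminormFamily ℂ (EuclideanSpace ℝ (Fin d)) ℂ)
  let m : ℕ := s.sup Prod.snd + 1
  let g := (mulX i)^[m] χ
  have hbound : ∀ R : ℝ, 1 ≤ R → q g ≤ R⁻¹ * (C * p g) := by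
    intro R hR
    have hR0 : 0 < R := by positivity
    have hdiff : T (g - rescale m R hR0.ne' g) = 0 := by
      apply hT0
      have hc : Filter.Tendsto (fun x : EuclideanSpace ℝ (Fin d) ↦ R • x) (𝓝 0) (𝓝 0) := by
        simpa using (continuous_const_smul R).tendsto (0 : EuclideanSpace ℝ (Fin d))
      filter_upwards [hχ, hc.eventually hχ] with x h1 h2
      have hRm : (R : ℂ) ^ m ≠ 0 := pow_ne_zero _ (by exact_mod_cast hR0.ne')
      rw [sub_apply, rescale_apply, mulX_iterate_apply, mulX_iterate_apply, h1, h2]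
      simp only [PiLp.smul_apply, smul_eq_mul, Complex.ofReal_mul, mul_pow]
      field_simp
      simp
    have hq_eq : q g = q (rescale m R hR0.ne' g) := by
      rw [map_sub, sub_eq_zero] at hdiff
      change SchwartzMap.seminorm ℂ 0 0 (T g) = SchwartzMap.seminorm ℂ 0 0 (T _)
      rw [hdiff]
    have hp : p (rescale m R hR0.ne' g) ≤ R⁻¹ * p g := by
      refine Seminorm.finset_sup_apply_le (by positivity) fun j hj ↦ ?_
      have hjm : j.2 < m := Nat.lt_succ_of_le (Finset.le_sup (f := Prod.snd) hj)
      refine (seminorm_rescale_le hjm hR g).trans ?_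
      gcongr
      exact (Finset.le_sup (f := schwartzSeminormFamily ℂ (EuclideanSpace ℝ (Fin d)) ℂ) hj :
        _ ≤ p) g
    calc q g = q (rescale m R hR0.ne' g) := hq_eq
      _ ≤ C * p (rescale m R hR0.ne' g) := hC _
      _ ≤ C * (R⁻¹ * p g) := by gcongr
      _ = R⁻¹ * (C * p g) := by ring
  have hlim : Filter.Tendsto (fun R : ℝ ↦ R⁻¹ * (C * p g)) Filter.atTop (𝓝 0) := by
    simpa using tendsto_inv_atTop_zero.mul_const (C * p g)
  have hq0 : q g ≤ 0 :=
    ge_of_tendsto hlim ((Filter.eventually_ge_atTop 1).mono hbound)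
  have hTg : T g = 0 := by
    ext x
    exact norm_le_zero_iff.1 ((SchwartzMap.norm_le_seminorm ℂ (T g) x).trans hq0)
  rw [hT, sub_eq_zero] at hTg
  exact not_isLizorkin_of_fourier_eq_mulX_iterate i m (f := 𝓕⁻ g) (χ := χ) (by simp [g])
    (by simp [hχ.self_of_nhds]) ((hP _).1 ⟨_, hTg.symm⟩)
end

section
/- The Lizorkin space is dense in C₀(ℝ^d) with respect to the supremum norm: for every continuous function f : ℝ^d → ℂ vanishing at infinity and every ε > 0, there exists a Schwartz function φ : ℝ^d → ℂ with ∫_{ℝ^d} x^k φ(x) dx = 0 for every multi-index k ∈ ℕ^d such that sup_{x ∈ ℝ^d} |f(x) − φ(x)| < ε. -/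
/-!
On the Fourier side, all moments of a Schwartz function `φ` vanish as soon as `𝓕 φ` vanishes in a
neighbourhood of `0`: multiplying `φ` by a coordinate amounts to differentiating `𝓕 φ`, which
preserves this vanishing, and the integral of a Schwartz function is its Fourier transform at `0`
(`integral_monomial_mul_eq_zero`).

Given a Schwartz function `g`, multiply `𝓕 g` by `1 - χ`, where `χ` is a smooth bump function equal
to `1` near `0` and supported in a ball of radius `δ`. The inverse Fourier transform `φ` of the
product satisfies `‖g - φ‖_∞ ≤ ‖χ 𝓕 g‖_{L¹} ≤ ‖𝓕 g‖_∞ vol (B(0, δ))`. In dimension `d ≥ 1` this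
tends to `0` with `δ` (`exists_schwartz_fourier_eventuallyEq_zero`). Since Schwartz functions are
dense in `C₀` (`exists_schwartz_approx`), the theorem follows.
-/

open MeasureTheory Filter Topology
open scoped FourierTransform LineDeriv SchwartzMap ContDiff

/-- Schwartz functions (indeed smooth compactly supported ones) are uniformly dense among the
continuous functions vanishing at infinity. -/
lemma exists_schwartz_approx {E : Type*} [NormedAddCommGroup E] [InnerProductSpace ℝ E]
    [FiniteDimensional ℝ E] {f : E → ℂ} (hf : Continuous f)
    (hf0 : Tendsto f (cocompact E) (𝓝 0)) {ε : ℝ} (hε : 0 < ε) :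
    ∃ g : 𝓢(E, ℂ), ∀ x, ‖f x - g x‖ < ε := by
  have h1 : ∀ᶠ x in cocompact E, ‖f x‖ < ε / 2 := by
    have := hf0.norm
    rw [norm_zero] at this
    exact this.eventually_lt_const (half_pos hε)
  obtain ⟨R, hR⟩ := Metric.closedBall_compl_subset_of_mem_cocompact h1 (0 : E)
  let χ : ContDiffBump (0 : E) := ⟨|R| + 1, |R| + 2, by positivity, by linarith⟩
  have hχf : Continuous fun x => χ x • f x := χ.continuous.smul hf
  obtain ⟨g, hg, hgapprox, hgsupp⟩ := hχf.exists_contDiff_approx (ε := fun _ => ε / 2) ⊤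
    continuous_const fun _ => half_pos hε
  have hgc : HasCompactSupport g := by
    refine (χ.hasCompactSupport.smul_right (f' := f)).mono' ?_
    exact hgsupp.trans subset_closure
  refine ⟨hgc.toSchwartzMap hg, fun x => ?_⟩
  have h2 : ‖f x - χ x • f x‖ ≤ ε / 2 := by
    by_cases hx : x ∈ Metric.closedBall (0 : E) R
    · have : χ x = 1 := by
        apply χ.one_of_mem_closedBall
        refine Metric.closedBall_subset_closedBall ?_ hx
        exact (le_abs_self R).trans (by simp [χ])
      simpa [this] using (half_pos hε).le
    · have h3 : ‖f x‖ < ε / 2 := hR hx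
      have : f x - χ x • f x = (1 - χ x) • f x := by rw [sub_smul, one_smul]
      rw [this, norm_smul, Real.norm_of_nonneg (sub_nonneg.2 χ.le_one)]
      have h4 : 0 ≤ χ x := χ.nonneg
      nlinarith [norm_nonneg (f x)]
  have h5 := hgapprox x
  rw [dist_comm, dist_eq_norm] at h5
  calc ‖f x - g x‖ ≤ ‖f x - χ x • f x‖ + ‖χ x • f x - g x‖ := norm_sub_le_norm_sub_add_norm_sub ..
    _ < ε := by linarith

/-- Multiplying a Schwartz function by a linear form differentiates its Fourier transform, hence
preserves the vanishing of the latter near `0`. -/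
lemma fourier_smulLeftCLM_eventuallyEq_zero {E : Type*} [NormedAddCommGroup E]
    [InnerProductSpace ℝ E] [FiniteDimensional ℝ E] [MeasurableSpace E] [BorelSpace E]
    (φ : 𝓢(E, ℂ)) (m : E) (h : ⇑(𝓕 φ : 𝓢(E, ℂ)) =ᶠ[𝓝 0] 0) :
    ⇑(𝓕 (SchwartzMap.smulLeftCLM ℂ (inner ℝ · m) φ) : 𝓢(E, ℂ)) =ᶠ[𝓝 0] 0 := by
  have key := SchwartzMap.lineDerivOp_fourier_eq φ m
  rw [FourierTransform.fourier_smul] at key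
  filter_upwards [h.eventuallyEq_nhds] with x hx
  have h1 := congrArg (fun ψ : 𝓢(E, ℂ) => ψ x) key
  have h2 : fderiv ℝ (⇑(𝓕 φ : 𝓢(E, ℂ))) x = 0 := by
    rw [hx.fderiv_eq]
    simp
  simp only [SchwartzMap.lineDerivOp_apply_eq_fderiv, h2] at h1
  simpa using h1.symm

/-- If the Fourier transform of a Schwartz function vanishes near `0`, then all its moments
vanish. -/
lemma integral_monomial_mul_eq_zero {d : ℕ} (k : Fin d → ℕ)
    (φ : 𝓢(EuclideanSpace ℝ (Fin d), ℂ))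
    (h : ⇑(𝓕 φ : 𝓢(EuclideanSpace ℝ (Fin d), ℂ)) =ᶠ[𝓝 0] 0) :
    ∫ x : EuclideanSpace ℝ (Fin d), (∏ i, ((x i : ℝ) : ℂ) ^ k i) * φ x = 0 := by
  -- Induction on the total degree, peeling off one coordinate factor at a time.
  induction hn : ∑ i, k i generalizing k φ with
  | zero =>
    have hk : ∀ i, k i = 0 := by simpa using hn
    have h0 : (𝓕 φ : 𝓢(EuclideanSpace ℝ (Fin d), ℂ)) 0 = 0 := h.self_of_nhds
    rw [SchwartzMap.fourier_coe, Real.fourier_eq] at h0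
    simpa [hk] using h0
  | succ n ih =>
    obtain ⟨j, hj⟩ : ∃ j, k j ≠ 0 := by
      by_contra! hk
      simp [hk] at hn
    let k' : Fin d → ℕ := Function.update k j (k j - 1)
    have hk : k = k' + Pi.single j 1 := by
      ext i
      by_cases hi : i = j
      · subst hi; simp [k']; omega
      · simp [k', hi]
    have hk' : ∑ i, k' i = n := by
      rw [hk] at hn
      simpa [Finset.sum_add_distrib] using hn
    have := ih k' _ (fourier_smulLeftCLM_eventuallyEq_zero φ (EuclideanSpace.single j 1) h) hk'
    rw [← this]
    congr 1 with x
    have hg : (inner ℝ · (EuclideanSpace.single j (1 : ℝ)) :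
        EuclideanSpace ℝ (Fin d) → ℝ).HasTemperateGrowth := by fun_prop
    have hp : ∏ i, ((x i : ℝ) : ℂ) ^ (Pi.single j 1 : Fin d → ℕ) i = x j := by
      rw [Finset.prod_eq_single j] <;> simp +contextual
    rw [SchwartzMap.smulLeftCLM_apply_apply hg, hk]
    simp only [Pi.add_apply, pow_add, Finset.prod_mul_distrib, hp]
    simp [EuclideanSpace.inner_single_right, mul_assoc]

/-- Schwartz functions whose Fourier transform vanishes near `0` are uniformly dense among Schwartz
functions, provided that the dimension is positive. -/
lemma exists_schwartz_fourier_eventuallyEq_zero {E : Type*} [NormedAddCommGroup E]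
    [InnerProductSpace ℝ E] [FiniteDimensional ℝ E] [Nontrivial E] [MeasurableSpace E]
    [BorelSpace E] (g : 𝓢(E, ℂ)) {ε : ℝ} (hε : 0 < ε) :
    ∃ φ : 𝓢(E, ℂ), ⇑(𝓕 φ : 𝓢(E, ℂ)) =ᶠ[𝓝 0] 0 ∧ ∀ x, ‖g x - φ x‖ < ε := by
  obtain ⟨C, hC⟩ : ∃ C, ∀ x, ‖(𝓕 g : 𝓢(E, ℂ)) x‖ ≤ C :=
    ⟨_, fun x => SchwartzMap.norm_fourier_apply_le_toLp_one g x⟩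
  have hC0 : 0 ≤ C := (norm_nonneg _).trans (hC 0)
  obtain ⟨δ, hδ, hδ0⟩ : ∃ δ : ℝ, C * volume.real (Metric.closedBall (0 : E) δ) < ε ∧ 0 < δ := by
    have hlim : Tendsto (fun δ : ℝ =>
        C * (δ ^ Module.finrank ℝ E * volume.real (Metric.ball (0 : E) 1))) (𝓝[>] 0) (𝓝 0) := by
      apply tendsto_nhdsWithin_of_tendsto_nhds
      refine Continuous.tendsto' (by fun_prop) _ _ ?_
      simp [Module.finrank_pos.ne']
    obtain ⟨δ, h1, h2⟩ := ((hlim.eventually_lt_const hε).and self_mem_nhdsWithin).exists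
    refine ⟨δ, ?_, h2⟩
    rwa [Measure.addHaar_real_closedBall _ _ (le_of_lt h2)]
  let χ : ContDiffBump (0 : E) := ⟨δ / 2, δ, half_pos hδ0, half_lt_self hδ0⟩
  have hχ : (χ : E → ℝ).HasTemperateGrowth := χ.hasCompactSupport.hasTemperateGrowth χ.contDiff
  set ψ : 𝓢(E, ℂ) := SchwartzMap.smulLeftCLM ℂ (χ : E → ℝ) (𝓕 g) with hψ
  have hψx : ∀ x, ψ x = χ x • (𝓕 g : 𝓢(E, ℂ)) x := SchwartzMap.smulLeftCLM_apply_apply hχ _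
  refine ⟨g - 𝓕⁻ ψ, ?_, fun x => ?_⟩
  · have h1 : (𝓕 (g - 𝓕⁻ ψ) : 𝓢(E, ℂ)) = 𝓕 g - 𝓕 (𝓕⁻ ψ : 𝓢(E, ℂ)) :=
      map_sub (SchwartzMap.fourierTransformCLM ℂ) _ _
    rw [h1, FourierTransform.fourier_fourierInv_eq]
    filter_upwards [χ.eventuallyEq_one] with x hx
    simp [hψx, hx]
  · have h1 : g x - (g - 𝓕⁻ ψ) x = (𝓕 ψ : 𝓢(E, ℂ)) (-x) := by
      simp [SchwartzMap.fourierInv_apply_eq]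
    rw [h1]
    refine (SchwartzMap.norm_fourier_apply_le_toLp_one ψ _).trans_lt (lt_of_le_of_lt ?_ hδ)
    rw [SchwartzMap.norm_toLp_one, ← setIntegral_eq_integral_of_forall_compl_eq_zero
      (s := Metric.closedBall (0 : E) δ)]
    · refine (Real.le_norm_self _).trans (norm_setIntegral_le_of_norm_le_const
        measure_closedBall_lt_top fun y _ => ?_)
      rw [norm_norm, hψx, norm_smul, Real.norm_of_nonneg χ.nonneg]
      exact (mul_le_of_le_one_left (norm_nonneg _) χ.le_one).trans (hC y)
    · intro y hy
      have : χ y = 0 := χ.zero_of_le_dist (not_le.1 hy).le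
      simp [hψx, this]

/-- The Lizorkin space (Schwartz functions with all moments vanishing) is dense in
`C₀(ℝ^d)` for the supremum norm. -/
theorem lizorkin_dense_in_C0 (d : ℕ) (hd : 1 ≤ d)
    (f : EuclideanSpace ℝ (Fin d) → ℂ) (hf : Continuous f)
    (hf0 : Tendsto f (cocompact (EuclideanSpace ℝ (Fin d))) (𝓝 0))
    (ε : ℝ) (hε : 0 < ε) :
    ∃ φ : SchwartzMap (EuclideanSpace ℝ (Fin d)) ℂ,
      (∀ k : Fin d → ℕ,
        ∫ x : EuclideanSpace ℝ (Fin d), (∏ i, ((x i : ℝ) : ℂ) ^ k i) * φ x = 0) ∧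
      ∀ x, ‖f x - φ x‖ < ε := by
  have : Nonempty (Fin d) := ⟨⟨0, hd⟩⟩
  obtain ⟨g, hg⟩ := exists_schwartz_approx hf hf0 (half_pos hε)
  obtain ⟨φ, hφ, hgφ⟩ := exists_schwartz_fourier_eventuallyEq_zero g (half_pos hε)
  refine ⟨φ, fun k => integral_monomial_mul_eq_zero k φ hφ, fun x => ?_⟩
  calc ‖f x - φ x‖ ≤ ‖f x - g x‖ + ‖g x - φ x‖ := norm_sub_le_norm_sub_add_norm_sub ..
    _ < ε := by linarith [hg x, hgφ x]
end

section
/- Unit ball of a norm-one projected subspace as closed convex hull of projected extreme points: let X be a real Banach space and P : X → X a continuous linear map with P ∘ P = P and operator norm ‖P‖ = 1. Assume that the closed unit ball B = {x ∈ X : ‖x‖ ≤ 1} equals the closure of the convex hull of its set of extreme points E, and that ‖P(e)‖ = 1 for every e ∈ E with P(e) ≠ 0. Then {u ∈ range(P) : ‖u‖ ≤ 1} equals the closure of the convex hull of the image set P(E). -/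
/-! The projected unit ball is the image of the unit ball: a point `u` of the range with `‖u‖ ≤ 1`
is fixed by `P` and lies in the closed convex hull of `E`, so by continuity and linearity
`u = P u` lies in the closed convex hull of `P '' E`. Conversely, the unit ball of the range is
closed and convex, since the range is the fixed-point set of `P`, and it contains `P '' E`
because `‖P‖ = 1`. -/

open Metric

/-- Unit ball of a norm-one projected subspace as the closed convex hull of the
projected extreme points. -/
theorem unitBall_projection_extremePoints {X : Type*} [NormedAddCommGroup X]
    [NormedSpace ℝ X] [CompleteSpace X] (P : X →L[ℝ] X) (hP : ∀ x, P (P x) = P x)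
    (hPnorm : ‖P‖ = 1) (E : Set X)
    (hE : E = Set.extremePoints ℝ (closedBall (0 : X) 1))
    (hball : closedBall (0 : X) 1 = closure (convexHull ℝ E))
    (hPe : ∀ e ∈ E, P e ≠ 0 → ‖P e‖ = 1) :
    {u | u ∈ Set.range P ∧ ‖u‖ ≤ 1} = closure (convexHull ℝ (P '' E)) := by
  apply Set.Subset.antisymm
  · rintro _ ⟨⟨x, rfl⟩, hx⟩
    have hmem : P x ∈ closure (convexHull ℝ E) := by
      rw [← hball]
      simpa using hx
    have himage : P '' convexHull ℝ E = convexHull ℝ (P '' E) :=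
      P.toLinearMap.image_convexHull E
    rw [← himage, ← hP x]
    exact image_closure_subset_closure_image P.continuous (Set.mem_image_of_mem P hmem)
  · have hset : {u | u ∈ Set.range P ∧ ‖u‖ ≤ 1} = {u | P u = u} ∩ closedBall (0 : X) 1 := by
      ext u
      simp only [Set.mem_setOf_eq, Set.mem_inter_iff, mem_closedBall_zero_iff]
      refine and_congr_left fun _ => ⟨?_, fun h => ⟨u, h⟩⟩
      rintro ⟨x, rfl⟩
      exact hP x
    have hclosed : IsClosed {u | u ∈ Set.range P ∧ ‖u‖ ≤ 1} := by
      rw [hset]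
      exact (isClosed_eq P.continuous continuous_id).inter isClosed_closedBall
    have hconvex : Convex ℝ {u | u ∈ Set.range P ∧ ‖u‖ ≤ 1} := by
      rw [hset]
      refine Convex.inter ?_ (convex_closedBall 0 1)
      intro x hx y hy a b _ _ _
      simp only [Set.mem_setOf_eq] at hx hy ⊢
      rw [map_add, map_smul, map_smul, hx, hy]
    refine closure_minimal (convexHull_min ?_ hconvex) hclosed
    rintro _ ⟨e, he, rfl⟩
    have hnorm : ‖e‖ ≤ 1 := by
      rw [hE] at he
      simpa using he.1
    exact ⟨⟨e, rfl⟩, (P.le_of_opNorm_le hPnorm.le e).trans (by simpa using hnorm)⟩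
end

section
/- Truncated Taylor expansions multiplied by a bump function converge in the Schwartz topology: let f : ℝ^d → ℂ be a smooth function such that for every x ∈ ℝ^d the Taylor series of f at 0 converges absolutely to f(x), i.e. Σ_{n ∈ ℕ^d} |∂^n f(0)| |x^n| / n! < ∞ and f(x) = Σ_{n ∈ ℕ^d} (∂^n f(0)/n!) x^n. Let φ₀ : ℝ^d → ℂ be smooth with compact support. Then the compactly supported smooth functions g_j(x) = Σ_{n ∈ ℕ^d, |n| < j} (∂^n f(0)/n!) x^n φ₀(x) converge, as j → ∞, to f·φ₀ in the topology of the Schwartz space S(ℝ^d). -/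
/-!
Write `c n = ∂^n f(0) / n!`, so that `f = ∑ c n x^n`, with absolute convergence at *every* point.
This convergence everywhere makes very crude derivative bounds sufficient. If all derivatives of order
`≤ K` of `h₁` and `h₂` are bounded by `B₁` and `B₂` on a set, then those of `h₁ * h₂` are bounded by
`2 ^ K * B₁ * B₂` (Leibniz). Iterating over all the factors of a monomial, the derivatives of order
`≤ K` of `c n x^n φ₀` on the compact set `tsupport φ₀` are at most a constant times
`‖c n‖ ∏ i, M i ^ n i`, where `M i` depends only on `K` and on the support. These bounds are summable,
by absolute convergence of the Taylor series at the point `M`. They hold globally because `φ₀`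
vanishes off its support, so the series `∑ c n x^n φ₀` may be differentiated termwise. Every Schwartz
seminorm of `f φ₀ - g j` is then at most a constant times the tail of a convergent series.
-/


open MeasureTheory Filter Topology

/-- The partial derivative of a function on `ℝ^d` in the `i`-th coordinate direction. -/
noncomputable def coordPDeriv {d : ℕ} {F : Type*} [NormedAddCommGroup F]
    [NormedSpace ℝ F] (i : Fin d) (f : EuclideanSpace ℝ (Fin d) → F) :
    EuclideanSpace ℝ (Fin d) → F :=
  fun x => fderiv ℝ f x (EuclideanSpace.single i 1)

/-- The iterated coordinate partial derivative `∂^k` associated to a multi-index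
`k : Fin d → ℕ`. -/
noncomputable def multiPDeriv {d : ℕ} {F : Type*} [NormedAddCommGroup F]
    [NormedSpace ℝ F] (k : Fin d → ℕ) (f : EuclideanSpace ℝ (Fin d) → F) :
    EuclideanSpace ℝ (Fin d) → F :=
  (List.ofFn fun i : Fin d => (coordPDeriv i)^[k i]).foldr (fun D g => D g) f

/-- The function `h` is smooth and its derivatives of order at most `K` are bounded by `B` on `s`. -/
def DerivBound {E : Type*} [NormedAddCommGroup E] [NormedSpace ℝ E]
    (K : ℕ) (s : Set E) (h : E → ℂ) (B : ℝ) : Prop :=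
  ContDiff ℝ (⊤ : ℕ∞) h ∧ ∀ x ∈ s, ∀ k ≤ K, ‖iteratedFDeriv ℝ k h x‖ ≤ B

namespace DerivBound

variable {E : Type*} [NormedAddCommGroup E] [NormedSpace ℝ E] {K : ℕ} {s : Set E}

lemma const (c : ℂ) : DerivBound K s (fun _ => c) ‖c‖ := by
  refine ⟨contDiff_const, fun x _ k _ => ?_⟩
  rcases Nat.eq_zero_or_pos k with rfl | hk
  · simp
  · rw [iteratedFDeriv_const_of_ne hk.ne']
    simp

lemma mul {h₁ h₂ : E → ℂ} {B₁ B₂ : ℝ} (H₁ : DerivBound K s h₁ B₁) (H₂ : DerivBound K s h₂ B₂) :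
    DerivBound K s (fun x => h₁ x * h₂ x) (2 ^ K * B₁ * B₂) := by
  refine ⟨H₁.1.mul H₂.1, fun x hx k hk => ?_⟩
  have hB₁ : 0 ≤ B₁ := (norm_nonneg _).trans (H₁.2 x hx 0 (Nat.zero_le _))
  have hB₂ : 0 ≤ B₂ := (norm_nonneg _).trans (H₂.2 x hx 0 (Nat.zero_le _))
  calc ‖iteratedFDeriv ℝ k (fun x => h₁ x * h₂ x) x‖
      ≤ ∑ i ∈ Finset.range (k + 1), (k.choose i : ℝ) * ‖iteratedFDeriv ℝ i h₁ x‖ *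
          ‖iteratedFDeriv ℝ (k - i) h₂ x‖ :=
        norm_iteratedFDeriv_mul_le H₁.1 H₂.1 x (mod_cast le_top)
    _ ≤ ∑ i ∈ Finset.range (k + 1), (k.choose i : ℝ) * B₁ * B₂ := by
        refine Finset.sum_le_sum fun i hi => ?_
        have hi' : i ≤ K := (Nat.lt_succ_iff.mp (Finset.mem_range.mp hi)).trans hk
        gcongr
        · exact H₁.2 x hx i hi'
        · exact H₂.2 x hx (k - i) ((Nat.sub_le _ _).trans hk)
    _ = 2 ^ k * B₁ * B₂ := by
        rw [← Finset.sum_mul, ← Finset.sum_mul]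
        congr 2
        exact_mod_cast Nat.sum_range_choose k
    _ ≤ 2 ^ K * B₁ * B₂ := by
        gcongr
        norm_num

lemma pow {h : E → ℂ} {B : ℝ} (H : DerivBound K s h B) (n : ℕ) :
    DerivBound K s (fun x => h x ^ n) ((2 ^ K * B) ^ n) := by
  induction n with
  | zero => simpa using const (K := K) (s := s) 1
  | succ n ih =>
    convert H.mul ih using 1
    · funext x
      ring
    · ring

lemma prod {ι : Type*} (t : Finset ι) {h : ι → E → ℂ} {B : ι → ℝ}
    (H : ∀ i ∈ t, DerivBound K s (h i) (B i)) :
    DerivBound K s (fun x => ∏ i ∈ t, h i x) (∏ i ∈ t, (2 ^ K * B i)) := by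
  classical
  induction t using Finset.induction_on with
  | empty => simpa using const (K := K) (s := s) 1
  | insert a t ha ih =>
    simp only [Finset.prod_insert ha]
    exact (H a (Finset.mem_insert_self _ _)).mul
      (ih fun i hi => H i (Finset.mem_insert_of_mem hi))

lemma exists_of_isCompact (K : ℕ) (hs : IsCompact s) {h : E → ℂ}
    (hh : ContDiff ℝ (⊤ : ℕ∞) h) : ∃ B, 0 ≤ B ∧ DerivBound K s h B := by
  have hb : ∀ k : ℕ, ∃ C, ∀ x ∈ s, ‖iteratedFDeriv ℝ k h x‖ ≤ C := fun k =>
    hs.exists_bound_of_continuousOn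
      (hh.continuous_iteratedFDeriv (m := k) (mod_cast le_top)).continuousOn
  choose C hC using hb
  refine ⟨∑ k ∈ Finset.range (K + 1), |C k|, Finset.sum_nonneg fun _ _ => abs_nonneg _, hh,
    fun x hx k hk => ((hC k x hx).trans (le_abs_self _)).trans ?_⟩
  exact Finset.single_le_sum (f := fun k => |C k|) (fun _ _ => abs_nonneg _)
    (Finset.mem_range.mpr (Nat.lt_succ_of_le hk))

end DerivBound

/-- Off `tsupport φ` a product with `φ` has vanishing derivatives, so a bound on `tsupport φ` is
global. -/
lemma DerivBound.norm_le_of_tsupport {E : Type*} [NormedAddCommGroup E] [NormedSpace ℝ E] {K : ℕ}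
    {h φ : E → ℂ} {B : ℝ} (H : DerivBound K (tsupport φ) (fun x => h x * φ x) B) (hB : 0 ≤ B)
    {k : ℕ} (hk : k ≤ K) (x : E) : ‖iteratedFDeriv ℝ k (fun x => h x * φ x) x‖ ≤ B := by
  by_cases hx : x ∈ tsupport φ
  · exact H.2 x hx k hk
  · have h0 : iteratedFDeriv ℝ k (fun x => h x * φ x) x = 0 := by
      by_contra hne
      exact hx (tsupport_mul_subset_right (f := h) (support_iteratedFDeriv_subset k hne))
    rw [h0, norm_zero]
    exact hB

/-- A power series with absolute convergence everywhere, times a bump function, has terms whose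
derivatives of order at most `K` are dominated uniformly and summably. -/
lemma exists_summable_bound {d : ℕ} (c : (Fin d → ℕ) → ℂ)
    (hc : ∀ x : EuclideanSpace ℝ (Fin d),
      Summable fun n : Fin d → ℕ => ‖c n‖ * ‖∏ i, ((x i : ℝ) : ℂ) ^ n i‖)
    {φ : EuclideanSpace ℝ (Fin d) → ℂ} (hφ : ContDiff ℝ (⊤ : ℕ∞) φ) (hφc : HasCompactSupport φ)
    (K : ℕ) : ∃ v : (Fin d → ℕ) → ℝ, Summable v ∧ ∀ n, ∀ k ≤ K, ∀ x,
      ‖iteratedFDeriv ℝ k (fun x => c n * (∏ i, ((x i : ℝ) : ℂ) ^ n i) * φ x) x‖ ≤ v n := by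
  have hcoord : ∀ i : Fin d,
      ContDiff ℝ (⊤ : ℕ∞) (fun x : EuclideanSpace ℝ (Fin d) => ((x i : ℝ) : ℂ)) := fun i =>
    (Complex.ofRealCLM.comp (EuclideanSpace.proj (𝕜 := ℝ) i)).contDiff
  choose b hb0 hb using fun i => DerivBound.exists_of_isCompact K hφc.isCompact (hcoord i)
  obtain ⟨A, hA0, hA⟩ := DerivBound.exists_of_isCompact K hφc.isCompact hφ
  have key : ∀ n : Fin d → ℕ, DerivBound K (tsupport φ)
      (fun x => c n * (∏ i, ((x i : ℝ) : ℂ) ^ n i) * φ x)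
      (2 ^ K * (2 ^ K * ‖c n‖ * ∏ i, (2 ^ K * (2 ^ K * b i) ^ n i)) * A) := fun n =>
    ((DerivBound.const (c n)).mul
      (DerivBound.prod Finset.univ fun i _ => (hb i).pow (n i))).mul hA
  refine ⟨_, ?_, fun n k hk x => (key n).norm_le_of_tsupport ?_ hk x⟩
  · -- the bound is, up to a constant, the Taylor series at the point `(2 ^ K * b i)_i`
    have := (hc (WithLp.toLp 2 fun i => 2 ^ K * b i)).mul_left (2 ^ K * 2 ^ K * (2 ^ K) ^ d * A)
    refine this.congr fun n => ?_
    have hn : ‖∏ i, (((2 ^ K * b i : ℝ)) : ℂ) ^ n i‖ = ∏ i, (2 ^ K * b i) ^ n i := by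
      rw [norm_prod]
      refine Finset.prod_congr rfl fun i _ => ?_
      rw [norm_pow, Complex.norm_real, Real.norm_of_nonneg (mul_nonneg (by positivity) (hb0 i))]
    simp only [hn, Finset.prod_mul_distrib, Finset.prod_const, Finset.card_univ, Fintype.card_fin]
    ring
  · have : 0 ≤ ∏ i, ((2 : ℝ) ^ K * (2 ^ K * b i) ^ n i) :=
      Finset.prod_nonneg fun i _ => by have := hb0 i; positivity
    positivity

/-- The multi-indices of degree less than `j` exhaust `ℕ^d`. -/
lemma tendsto_multiIndex_atTop (d : ℕ) :
    Tendsto (fun j : ℕ => (Fintype.piFinset fun _ : Fin d => Finset.range j).filter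
      (fun n => ∑ i, n i < j)) atTop atTop := by
  refine tendsto_atTop_finset_of_monotone (fun j j' hj n hn => ?_) fun n => ⟨∑ i, n i + 1, ?_⟩
  · simp only [Finset.mem_filter, Fintype.mem_piFinset, Finset.mem_range] at hn ⊢
    exact ⟨fun i => (hn.1 i).trans_le hj, hn.2.trans_le hj⟩
  · simp only [Finset.mem_filter, Fintype.mem_piFinset, Finset.mem_range]
    exact ⟨fun i => Nat.lt_succ_of_le
      (Finset.single_le_sum (f := n) (fun _ _ => Nat.zero_le _) (Finset.mem_univ i)),
      Nat.lt_succ_self _⟩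

/-- Truncated Taylor expansions multiplied by a bump function converge in the Schwartz
topology to the product of the function with the bump function. -/
theorem taylor_truncation_mul_bump_tendsto (d : ℕ)
    (f : EuclideanSpace ℝ (Fin d) → ℂ) (hf : ContDiff ℝ (⊤ : ℕ∞) f)
    (habs : ∀ x : EuclideanSpace ℝ (Fin d),
      Summable fun n : Fin d → ℕ =>
        ‖multiPDeriv n f 0‖ * ‖∏ i, ((x i : ℝ) : ℂ) ^ n i‖ /
          ((∏ i, Nat.factorial (n i) : ℕ) : ℝ))
    (htaylor : ∀ x : EuclideanSpace ℝ (Fin d),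
      f x = ∑' n : Fin d → ℕ,
        (multiPDeriv n f 0 / ((∏ i, Nat.factorial (n i) : ℕ) : ℂ)) *
          ∏ i, ((x i : ℝ) : ℂ) ^ n i)
    (φ₀ : EuclideanSpace ℝ (Fin d) → ℂ) (hφ₀ : ContDiff ℝ (⊤ : ℕ∞) φ₀)
    (hφ₀c : HasCompactSupport φ₀)
    (g : ℕ → SchwartzMap (EuclideanSpace ℝ (Fin d)) ℂ)
    (hg : ∀ (j : ℕ) (x : EuclideanSpace ℝ (Fin d)),
      g j x = (∑ n ∈ (Fintype.piFinset fun _ : Fin d => Finset.range j).filter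
          (fun n => ∑ i, n i < j),
        (multiPDeriv n f 0 / ((∏ i, Nat.factorial (n i) : ℕ) : ℂ)) *
          ∏ i, ((x i : ℝ) : ℂ) ^ n i) * φ₀ x)
    (G : SchwartzMap (EuclideanSpace ℝ (Fin d)) ℂ)
    (hG : ∀ x, G x = f x * φ₀ x) :
    Tendsto g atTop (𝓝 G) := by
  set c : (Fin d → ℕ) → ℂ :=
    fun n => multiPDeriv n f 0 / ((∏ i, Nat.factorial (n i) : ℕ) : ℂ) with hcdef
  have hc : ∀ x : EuclideanSpace ℝ (Fin d),
      Summable fun n : Fin d → ℕ => ‖c n‖ * ‖∏ i, ((x i : ℝ) : ℂ) ^ n i‖ := fun x =>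
    (habs x).congr fun n => by
      simp only [hcdef, norm_div, Complex.norm_natCast]
      ring
  set S : ℕ → Finset (Fin d → ℕ) := fun j =>
    (Fintype.piFinset fun _ : Fin d => Finset.range j).filter (fun n => ∑ i, n i < j) with hS
  set u : (Fin d → ℕ) → EuclideanSpace ℝ (Fin d) → ℂ :=
    fun n x => c n * (∏ i, ((x i : ℝ) : ℂ) ^ n i) * φ₀ x with hu
  have hu_smooth : ∀ n, ContDiff ℝ (⊤ : ℕ∞) (u n) := fun n =>
    (contDiff_const.mul (contDiff_prod fun i _ =>
      (Complex.ofRealCLM.comp (EuclideanSpace.proj (𝕜 := ℝ) i)).contDiff.pow (n i))).mul hφ₀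
  have hsum : ∀ x, Summable fun n => u n x := fun x =>
    (Summable.of_norm ((hc x).congr fun n => (norm_mul _ _).symm)).mul_right (φ₀ x)
  have hdiff : ∀ j, ⇑(G - g j) = fun x => ∑' n : {n // n ∉ S j}, u n x := fun j => by
    funext x
    have hGx : G x = ∑' n, u n x := by
      rw [hG, htaylor, ← tsum_mul_right]
    have hgx : g j x = ∑ n ∈ S j, u n x := by
      rw [hg, Finset.sum_mul]
    rw [sub_apply, hGx, hgx, ← (hsum x).sum_add_tsum_subtype_compl (S j)]
    simp
  obtain ⟨R, hR0, hR⟩ : ∃ R : ℝ, 0 < R ∧ ∀ x ∈ tsupport φ₀, ‖x‖ ≤ R :=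
    hφ₀c.isCompact.isBounded.exists_pos_norm_le
  rw [(schwartz_withSeminorms ℝ (EuclideanSpace ℝ (Fin d)) ℂ).tendsto_nhds]
  rintro ⟨p, k⟩ ε hε
  obtain ⟨v, hv, hvb⟩ := exists_summable_bound c hc hφ₀ hφ₀c k
  have hv0 : ∀ n, 0 ≤ v n := fun n => (norm_nonneg _).trans (hvb n 0 (Nat.zero_le _) 0)
  have hlim : Tendsto (fun j => R ^ p * ∑' n : {n // n ∉ S j}, v n) atTop (𝓝 0) := by
    simpa using ((tendsto_tsum_compl_atTop_zero v).comp (tendsto_multiIndex_atTop d)).const_mul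
      (R ^ p)
  filter_upwards [hlim.eventually_lt_const hε] with j hj
  rw [map_sub_rev]
  refine lt_of_le_of_lt ?_ hj
  refine SchwartzMap.seminorm_le_bound ℝ p k (G - g j)
    (mul_nonneg (by positivity) (tsum_nonneg fun n => hv0 n)) fun x => ?_
  have hvj : Summable fun n : {n // n ∉ S j} => v n := hv.subtype _
  by_cases hx : x ∈ tsupport φ₀
  · have hD : iteratedFDeriv ℝ k (⇑(G - g j)) x =
        ∑' n : {n // n ∉ S j}, iteratedFDeriv ℝ k (u n) x := by
      rw [hdiff j]
      exact congrFun (iteratedFDeriv_tsum (𝕜 := ℝ) (N := (k : ℕ∞))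
        (f := fun n : {n // n ∉ S j} => u n) (v := fun _ n => v n)
        (fun n => (hu_smooth n).of_le (mod_cast le_top)) (fun _ _ => hvj)
        (fun m n y hm => hvb n m (mod_cast hm) y) le_rfl) x
    rw [hD]
    gcongr
    · exact hR x hx
    · exact tsum_of_norm_bounded hvj.hasSum fun n => hvb n k le_rfl x
  · have h0 : iteratedFDeriv ℝ k (⇑(G - g j)) x = 0 := by
      have hfac : ⇑(G - g j) = fun x =>
          (f x - ∑ n ∈ S j, c n * ∏ i, ((x i : ℝ) : ℂ) ^ n i) * φ₀ x := by
        funext y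
        rw [sub_apply, hG, hg, sub_mul]
      by_contra hne
      have := support_iteratedFDeriv_subset k hne
      rw [hfac] at this
      exact hx (tsupport_mul_subset_right this)
    rw [h0, norm_zero, mul_zero]
    exact mul_nonneg (by positivity) (tsum_nonneg fun n => hv0 n)
end

section
/- Extreme points of the unit ball of even measures: let d ≥ 1 and let C be the set of finite signed Borel measures μ on ℝ^d that are even (the pushforward of μ under x ↦ −x equals μ) and have total variation norm ‖μ‖_TV ≤ 1. Then every extreme point of C is of the form ±(½ δ_τ + ½ δ_{−τ}) for some τ ∈ ℝ^d, where δ_τ denotes the Dirac measure at τ. -/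
/-!
Let `C` be the unit ball of even signed measures, and `μ` an extreme point of `C`.

If `S = -S` is measurable and `p = |μ|(S)`, `q = |μ|(Sᶜ)`, then `μ` is the midpoint of the two
elements `(1 ± q) μ|_S + (1 ∓ p) μ|_{Sᶜ}` of `C`. They are therefore equal, so `q μ|_S = p μ|_{Sᶜ}`,
which forces `p = 0` or `q = 0` (`variation_symm_zero`).

The map `x ↦ (x i * x j)_{i j}` is measurable and its fibres are the orbits `{x, -x}`, so preimages
under it are symmetric. Hence the image of `|μ|` under it is, up to scaling, a zero-one measure on a
standard Borel space, i.e. a multiple of a Dirac measure, and `|μ|` lives on a single orbit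
`{τ, -τ}` (`exists_concentrated`). By evenness, `μ = c • ν` with `ν = ½ δ_τ + ½ δ_{-τ}`
(`eq_smul_symmDirac`); here `|c| ≤ 1`, and since `μ` is a convex combination of `ν` and `-ν` with
weights `(1 ± c) / 2`, extremality gives `c = ±1` (`coeff_eq`). The signs of `μ` take care
of themselves, and so does `μ = 0`, which is `0 • ν` for `τ = 0`.
-/

open MeasureTheory

namespace EvenExtreme

variable {d : ℕ}

/-- The unit ball of even signed measures, with the norm written as the supremum-based
`variation`; it agrees with the ball defined through `totalVariation`. -/
def ball (d : ℕ) : Set (SignedMeasure (EuclideanSpace ℝ (Fin d))) :=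
  {ν | ν.map (fun x => -x) = ν ∧ ν.variation Set.univ ≤ 1}

/-- The symmetrized Dirac measure `½ δ_τ + ½ δ_{-τ}`. -/
noncomputable def symmDirac (τ : EuclideanSpace ℝ (Fin d)) :
    SignedMeasure (EuclideanSpace ℝ (Fin d)) :=
  (2⁻¹ : ℝ) • (Measure.dirac τ).toSignedMeasure + (2⁻¹ : ℝ) • (Measure.dirac (-τ)).toSignedMeasure

/-- The map `x ↦ (x i * x j)_{i j}`, which identifies exactly `x` and `-x`. -/
def fold (x : EuclideanSpace ℝ (Fin d)) : Fin d × Fin d → ℝ := fun p => x p.1 * x p.2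

lemma measurable_fold : Measurable (fold (d := d)) := by
  unfold fold
  fun_prop

lemma fold_neg (x : EuclideanSpace ℝ (Fin d)) : fold (-x) = fold x := by
  funext p
  simp [fold]

lemma eq_or_eq_neg_of_fold_eq {x y : EuclideanSpace ℝ (Fin d)} (h : fold x = fold y) :
    x = y ∨ x = -y := by
  have h' : ∀ i j, x i * x j = y i * y j := fun i j => congrFun h (i, j)
  by_cases hy : ∃ i, y i ≠ 0
  · obtain ⟨i, hi⟩ := hy
    rcases mul_self_eq_mul_self_iff.1 (h' i i) with hx | hx
    · left
      ext j
      have := h' i j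
      rw [hx] at this
      exact mul_left_cancel₀ hi this
    · right
      ext j
      have := h' i j
      rw [hx] at this
      apply mul_left_cancel₀ hi
      simp only [PiLp.neg_apply]
      linarith
  · push Not at hy
    left
    ext i
    have := h' i i
    simp only [hy, mul_zero, mul_self_eq_zero] at this
    rw [this, hy]

lemma symmDirac_apply (τ : EuclideanSpace ℝ (Fin d)) {A : Set (EuclideanSpace ℝ (Fin d))}
    (hA : MeasurableSet A) :
    symmDirac τ A = 2⁻¹ * A.indicator 1 τ + 2⁻¹ * A.indicator 1 (-τ) := by
  simp only [symmDirac, _root_.add_apply, _root_.smul_apply, smul_eq_mul,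
    Measure.toSignedMeasure_apply_measurable hA, Measure.real, Measure.dirac_apply' _ hA]
  congr 2 <;> simp only [Set.indicator] <;> split_ifs <;> simp

lemma symmDirac_univ (τ : EuclideanSpace ℝ (Fin d)) : symmDirac τ Set.univ = 1 := by
  rw [symmDirac_apply τ MeasurableSet.univ]
  norm_num

lemma symmDirac_mem (τ : EuclideanSpace ℝ (Fin d)) : symmDirac τ ∈ ball d := by
  constructor
  · ext A hA
    rw [VectorMeasure.map_apply _ measurable_neg hA, symmDirac_apply τ hA,
      symmDirac_apply τ (measurable_neg hA)]
    change 2⁻¹ * A.indicator 1 (-τ) + 2⁻¹ * A.indicator 1 (- -τ) = _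
    rw [neg_neg, add_comm]
  · refine (VectorMeasure.variation_add_le _).trans ?_
    simp only [VectorMeasure.variation_smul, Measure.variation_toSignedMeasure]
    simp [← two_mul]

lemma neg_mem {ν : SignedMeasure (EuclideanSpace ℝ (Fin d))} (h : ν ∈ ball d) : -ν ∈ ball d := by
  refine ⟨?_, by simpa using h.2⟩
  rw [← neg_one_smul ℝ ν, VectorMeasure.map_smul, h.1]

lemma coeff_eq {μ : SignedMeasure (EuclideanSpace ℝ (Fin d))}
    (hμ : μ ∈ Set.extremePoints ℝ (ball d)) {c : ℝ} {τ : EuclideanSpace ℝ (Fin d)}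
    (h : μ = c • symmDirac τ) : c = 1 ∨ c = -1 := by
  have hc : |c| ≤ 1 := by
    have h1 := (μ.enorm_measure_le_variation Set.univ).trans hμ.1.2
    rw [h, _root_.smul_apply, symmDirac_univ] at h1
    simpa [enorm_eq_nnnorm, ← NNReal.coe_le_coe] using h1
  by_contra! hne
  obtain ⟨h1, h2⟩ := abs_le.1 hc
  have h1 : -1 < c := lt_of_le_of_ne h1 (Ne.symm hne.2)
  have h2 : c < 1 := lt_of_le_of_ne h2 hne.1
  have hs : μ ∈ openSegment ℝ (symmDirac τ) (-symmDirac τ) := by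
    refine ⟨(1 + c) / 2, (1 - c) / 2, by linarith, by linarith, by ring, ?_⟩
    rw [h]
    module
  have h3 := mem_extremePoints.1 hμ |>.2 _ (symmDirac_mem τ) _ (neg_mem (symmDirac_mem τ)) hs
  have h4 := congrArg (fun ν : SignedMeasure _ => ν Set.univ) (h3.1.trans h3.2.symm)
  simp only [_root_.neg_apply, symmDirac_univ] at h4
  norm_num at h4

lemma map_restrict {μ : SignedMeasure (EuclideanSpace ℝ (Fin d))}
    (hμ : μ.map (fun x => -x) = μ) {S : Set (EuclideanSpace ℝ (Fin d))} (hS : MeasurableSet S)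
    (hsym : (fun x => -x) ⁻¹' S = S) :
    (μ.restrict S).map (fun x => -x) = μ.restrict S := by
  conv_rhs => rw [← hμ, VectorMeasure.restrict_map _ measurable_neg hS, hsym]

/-- Reweighting `μ` by nonnegative constants on a symmetric set and its complement keeps it even,
and it stays in the ball as long as the reweighted mass of `|μ|` is at most `1`. -/
lemma combo_mem {μ : SignedMeasure (EuclideanSpace ℝ (Fin d))}
    (hμ : μ ∈ ball d) {S : Set (EuclideanSpace ℝ (Fin d))} (hS : MeasurableSet S)
    (hsym : (fun x => -x) ⁻¹' S = S) {a b : ℝ} (ha : 0 ≤ a) (hb : 0 ≤ b)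
    (hab : a * μ.variation.real S + b * μ.variation.real Sᶜ ≤ 1)
    (hfin : μ.variation Set.univ ≠ ⊤) :
    a • μ.restrict S + b • μ.restrict Sᶜ ∈ ball d := by
  constructor
  · rw [VectorMeasure.map_add, VectorMeasure.map_smul, VectorMeasure.map_smul,
      map_restrict hμ.1 hS hsym, map_restrict hμ.1 hS.compl (by rw [Set.preimage_compl, hsym])]
  · refine (VectorMeasure.variation_add_le _).trans ?_
    have : IsFiniteMeasure μ.variation := ⟨hfin.lt_top⟩
    rw [Measure.add_apply, VectorMeasure.variation_smul, VectorMeasure.variation_smul,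
      VectorMeasure.variation_restrict hS, VectorMeasure.variation_restrict hS.compl,
      Measure.smul_apply, Measure.smul_apply, Measure.restrict_apply_univ,
      Measure.restrict_apply_univ, ENNReal.smul_def, ENNReal.smul_def, smul_eq_mul, smul_eq_mul,
      ← ENNReal.toReal_le_toReal (by finiteness) (by finiteness),
      ENNReal.toReal_add (by finiteness) (by finiteness)]
    simpa [ENNReal.toReal_mul, abs_of_nonneg ha, abs_of_nonneg hb, Measure.real] using hab

/-- Extreme points are ergodic for the reflection `x ↦ -x`: `|μ|` charges a symmetric set or its
complement, not both. -/
lemma variation_symm_zero {μ : SignedMeasure (EuclideanSpace ℝ (Fin d))}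
    (hμ : μ ∈ Set.extremePoints ℝ (ball d)) {S : Set (EuclideanSpace ℝ (Fin d))}
    (hS : MeasurableSet S) (hsym : (fun x => -x) ⁻¹' S = S) :
    μ.variation S = 0 ∨ μ.variation Sᶜ = 0 := by
  have hle := hμ.1.2
  have hfin : μ.variation Set.univ ≠ ⊤ := (hle.trans_lt ENNReal.one_lt_top).ne
  have : IsFiniteMeasure μ.variation := ⟨hfin.lt_top⟩
  set p := μ.variation.real S with hp
  set q := μ.variation.real Sᶜ with hq
  have hp0 : 0 ≤ p := measureReal_nonneg
  have hq0 : 0 ≤ q := measureReal_nonneg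
  have hpq : p + q ≤ 1 := by
    rw [hp, hq, measureReal_add_measureReal_compl hS]
    exact ENNReal.toReal_le_of_le_ofReal zero_le_one (by simpa using hle)
  have h1 := combo_mem hμ.1 hS hsym (a := 1 + q) (b := 1 - p) (by linarith) (by linarith)
    (by rw [← hp, ← hq]; linarith) hfin
  have h2 := combo_mem hμ.1 hS hsym (a := 1 - q) (b := 1 + p) (by linarith) (by linarith)
    (by rw [← hp, ← hq]; linarith) hfin
  have hs : μ ∈ openSegment ℝ ((1 + q) • μ.restrict S + (1 - p) • μ.restrict Sᶜ)
      ((1 - q) • μ.restrict S + (1 + p) • μ.restrict Sᶜ) := by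
    refine ⟨1 / 2, 1 / 2, by norm_num, by norm_num, by norm_num, ?_⟩
    conv_rhs => rw [← VectorMeasure.restrict_add_restrict_compl (v := μ) hS]
    module
  have h3 := (mem_extremePoints.1 hμ |>.2 _ h1 _ h2 hs).1
  by_cases hq' : q = 0
  · right
    simpa [hq, Measure.real, ENNReal.toReal_eq_zero_iff] using hq'
  left
  rw [VectorMeasure.variation_apply_eq_zero hS]
  intro t htS ht
  have h4 := congrArg (fun ν : SignedMeasure _ => ν t) h3
  have ht0 : t ∩ Sᶜ = ∅ := by
    rw [← Set.sdiff_eq, Set.sdiff_eq_empty.2 htS]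
  simp only [_root_.add_apply, _root_.smul_apply,
    VectorMeasure.restrict_apply _ hS ht, VectorMeasure.restrict_apply _ hS.compl ht,
    ht0, Set.inter_eq_left.2 htS, VectorMeasure.empty, smul_eq_mul] at h4
  have h5 : q * μ t = 0 := by linarith
  exact (mul_eq_zero.1 h5).resolve_left hq'

lemma exists_concentrated {μ : SignedMeasure (EuclideanSpace ℝ (Fin d))}
    (hμ : μ ∈ Set.extremePoints ℝ (ball d)) :
    ∃ τ : EuclideanSpace ℝ (Fin d), μ.variation {τ, -τ}ᶜ = 0 := by
  by_cases h0 : μ.variation = 0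
  · exact ⟨0, by simp [h0]⟩
  have hfin : μ.variation Set.univ ≠ ⊤ := (hμ.1.2.trans_lt ENNReal.one_lt_top).ne
  set m := μ.variation Set.univ with hm
  have hm0 : m ≠ 0 := by simpa [hm] using h0
  set lam := m⁻¹ • μ.variation.map fold with hlam
  have hz : ∀ A, MeasurableSet A → lam A = 0 ∨ lam A = 1 := by
    intro A hA
    have hA' := measurable_fold (d := d) hA
    rw [hlam, Measure.smul_apply, Measure.map_apply measurable_fold hA, smul_eq_mul]
    rcases variation_symm_zero hμ hA' (by ext x; simp [fold_neg]) with h | h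
    · left
      rw [h, mul_zero]
    · right
      have h' := measure_add_measure_compl (μ := μ.variation) hA'
      rw [h, add_zero] at h'
      rw [h', ← hm, ENNReal.inv_mul_cancel hm0 hfin]
  have : IsZeroOneMeasure lam := ⟨fun A hA => hz A hA⟩
  have huniv : lam Set.univ = 1 := by
    rw [hlam, Measure.smul_apply, Measure.map_apply measurable_fold MeasurableSet.univ,
      smul_eq_mul, Set.preimage_univ, ← hm, ENNReal.inv_mul_cancel hm0 hfin]
  have : NeZero lam := ⟨fun h => by simp [h] at huniv⟩
  obtain ⟨y, hy⟩ := IsZeroOneMeasure.exists_eq_dirac (μ := lam)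
  have hfib : μ.variation (fold ⁻¹' {y})ᶜ = 0 := by
    have h1 : lam {y}ᶜ = 0 := by rw [hy]; simp
    rw [hlam, Measure.smul_apply, Measure.map_apply measurable_fold (by measurability),
      smul_eq_mul, mul_eq_zero] at h1
    exact h1.resolve_left (ENNReal.inv_ne_zero.2 hfin)
  -- The fibre over `y` is nonempty, since its complement is null and `|μ| ≠ 0`.
  have hne : (fold ⁻¹' {y} : Set (EuclideanSpace ℝ (Fin d))).Nonempty := by
    by_contra h
    rw [Set.not_nonempty_iff_eq_empty.1 h, Set.compl_empty] at hfib
    exact hm0 hfib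
  obtain ⟨τ, hτ⟩ := hne
  refine ⟨τ, measure_mono_null (Set.compl_subset_compl.2 fun x hx => ?_) hfib⟩
  exact eq_or_eq_neg_of_fold_eq (hx.trans hτ.symm)

lemma inter_pair_left {α : Type*} {A : Set α} {a b : α} (ha : a ∈ A) (hb : b ∉ A) :
    A ∩ {a, b} = {a} := by grind

lemma inter_pair_right {α : Type*} {A : Set α} {a b : α} (ha : a ∉ A) (hb : b ∈ A) :
    A ∩ {a, b} = {b} := by grind

lemma inter_pair_none {α : Type*} {A : Set α} {a b : α} (ha : a ∉ A) (hb : b ∉ A) :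
    A ∩ {a, b} = ∅ := by grind

lemma eq_smul_symmDirac {μ : SignedMeasure (EuclideanSpace ℝ (Fin d))}
    (hμ : μ.map (fun x => -x) = μ) {τ : EuclideanSpace ℝ (Fin d)}
    (h : μ.variation {τ, -τ}ᶜ = 0) : μ = μ {τ, -τ} • symmDirac τ := by
  have hK : MeasurableSet ({τ, -τ} : Set (EuclideanSpace ℝ (Fin d))) := by measurability
  have hnull := (VectorMeasure.variation_apply_eq_zero hK.compl).1 h
  have heven : μ {-τ} = μ {τ} := by
    conv_rhs => rw [← hμ, VectorMeasure.map_apply _ measurable_neg (measurableSet_singleton τ)]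
    congr 1
    ext x
    simp
  have hpair : τ ≠ -τ → μ {τ, -τ} = 2 * μ {τ} := by
    intro hne
    rw [Set.insert_eq, VectorMeasure.of_union (by simpa using hne) (measurableSet_singleton _)
      (measurableSet_singleton _), heven, two_mul]
  ext A hA
  have hAK : μ A = μ (A ∩ {τ, -τ}) := by
    conv_lhs => rw [← Set.inter_union_compl A {τ, -τ}]
    rw [VectorMeasure.of_union (disjoint_compl_right.mono Set.inter_subset_right Set.inter_subset_right)
      (hA.inter hK) (hA.inter hK.compl),
      hnull _ Set.inter_subset_right (hA.inter hK.compl), add_zero]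
  rw [hAK, _root_.smul_apply, symmDirac_apply τ hA, smul_eq_mul]
  by_cases h1 : τ ∈ A <;> by_cases h2 : -τ ∈ A
  · rw [Set.inter_eq_right.2 (by simp [Set.insert_subset_iff, h1, h2])]
    simp only [h1, h2, Set.indicator_of_mem, Pi.one_apply]
    ring
  · have hne : τ ≠ -τ := fun e => h2 (e ▸ h1)
    have : A ∩ {τ, -τ} = {τ} := inter_pair_left h1 h2
    rw [this, hpair hne]
    simp only [h1, h2, Set.indicator_of_mem, Set.indicator_of_notMem,
      not_false_eq_true, Pi.one_apply]
    ring
  · have hne : τ ≠ -τ := fun e => h1 (e ▸ h2)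
    have : A ∩ {τ, -τ} = {-τ} := inter_pair_right h1 h2
    rw [this, hpair hne, heven]
    simp only [h1, h2, Set.indicator_of_mem, Set.indicator_of_notMem,
      not_false_eq_true, Pi.one_apply]
    ring
  · have : A ∩ {τ, -τ} = ∅ := inter_pair_none h1 h2
    rw [this]
    simp [h1, h2]

end EvenExtreme

/-- Extreme points of the unit ball of even finite signed measures on `ℝ^d` are the
symmetrized Dirac measures `±(½ δ_τ + ½ δ_{-τ})`. -/
theorem extremePoints_even_measures (d : ℕ) (hd : 1 ≤ d)
    (μ : SignedMeasure (EuclideanSpace ℝ (Fin d)))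
    (hμ : μ ∈ Set.extremePoints ℝ
      {ν : SignedMeasure (EuclideanSpace ℝ (Fin d)) |
        ν.map (fun x => -x) = ν ∧ ν.totalVariation Set.univ ≤ 1}) :
    ∃ τ : EuclideanSpace ℝ (Fin d),
      μ = (2⁻¹ : ℝ) • (Measure.dirac τ).toSignedMeasure
          + (2⁻¹ : ℝ) • (Measure.dirac (-τ)).toSignedMeasure ∨
      μ = -((2⁻¹ : ℝ) • (Measure.dirac τ).toSignedMeasure
          + (2⁻¹ : ℝ) • (Measure.dirac (-τ)).toSignedMeasure) := by
  simp only [SignedMeasure.totalVariation_eq_variation] at hμ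
  change μ ∈ Set.extremePoints ℝ (EvenExtreme.ball d) at hμ
  obtain ⟨τ, hτ⟩ := EvenExtreme.exists_concentrated hμ
  have h := EvenExtreme.eq_smul_symmDirac hμ.1.1 hτ
  refine ⟨τ, ?_⟩
  change μ = EvenExtreme.symmDirac τ ∨ μ = -EvenExtreme.symmDirac τ
  rcases EvenExtreme.coeff_eq hμ h with hc | hc
  · left
    rw [hc, one_smul] at h
    exact h
  · right
    rw [hc] at h
    rw [h]
    module
end
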